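/- Suppose the speed function V is Lipschitz continuous and satisfies 0 < V_min ≤ V(c) ≤ V_max for all c ≥ 0, and suppose that for every F ∈ 𝒫_{m,G} and every (t_d, x) ∈ 𝒯_d × 𝒳 the value x + z_F(t_d) lies in the range of z_F (i.e. all trips complete within the horizon 𝒯). Define the travel time T_F(t_d, x) := z_F^{−1}(x + z_F(t_d)) − t_d and the cost J(t_d; x, t_a; F) := α·T_F(t_d, x) + β·max(t_a − t_d − T_F(t_d, x), 0) + γ·max(t_d + T_F(t_d, x) − t_a, 0), with constants α, β, γ > 0. Then J is jointly continuous on 𝒯_d × 𝒳 × 𝒯_a × 𝒫_{m,G}, where 𝒫_{m,G} carries the weak convergence topology; moreover, for each fixed F ∈ 𝒫_{m,G}, the map (t_d, x, t_a) ↦ J(t_d; x, t_a; F) is Lipschitz continuous on 𝒯_d × 𝒳 × 𝒯_a, with a Lipschitz constant independent of F. -/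

import Mathlib

open MeasureTheory Set Filter

noncomputable section

/-- `Sset Td Xs z t` is the set `S_t(z)` of pairs (departure time, trip length) of the
agents travelling at time `t` in a system with characteristic travel distance `z`:
`S_t(z) = {(τ, ξ) : τ ∈ [0,t] ∩ 𝒯_d, ξ ∈ (z(t) − z(τ), ∞) ∩ 𝒳}`. -/
def Sset (Td Xs : Set ℝ) (z : ℝ → ℝ) (t : ℝ) : Set (ℝ × ℝ) :=
  {p : ℝ × ℝ | p.1 ∈ Set.Icc 0 t ∩ Td ∧ p.2 ∈ Set.Ioi (z t - z p.1) ∩ Xs}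

/-- `memP Td Xs Ta m G F` says that `F ∈ 𝒫_{m,G}`: `F` is a Borel probability measure
on `𝒯_d × 𝒳` with `F(B) ≤ G·λ₂(B)` for every Borel `B` and whose `𝒳`-marginal agrees
with that of the demand profile `m`, i.e. `F(𝒯_d × Q) = m(Q × 𝒯_a)` for all Borel `Q`. -/
def memP (Td Xs Ta : Set ℝ) (m : Measure (ℝ × ℝ)) (G : ℝ) (F : Measure (ℝ × ℝ)) : Prop :=
  IsProbabilityMeasure F ∧ F ((Td ×ˢ Xs)ᶜ) = 0 ∧
    (∀ B : Set (ℝ × ℝ), MeasurableSet B → F B ≤ ENNReal.ofReal G * volume B) ∧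
    ∀ Q : Set ℝ, MeasurableSet Q → F (Td ×ˢ Q) = m (Q ×ˢ Ta)

/-- The map `𝒰(z, F)(t) = ∫₀ᵗ V(F(S_s(z))) ds`. -/
def Umap (Td Xs : Set ℝ) (V : ℝ → ℝ) (F : Measure (ℝ × ℝ)) (z : ℝ → ℝ) (t : ℝ) : ℝ :=
  ∫ s in (0:ℝ)..t, V ((F (Sset Td Xs z s)).toReal)

/-- The distance associated with the norm `‖u‖_M = sup_{t ∈ [0,Tmax]} e^{−Mt}|u(t)|`. -/
def dM (M Tmax : ℝ) (u w : ℝ → ℝ) : ℝ :=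
  ⨆ t : Set.Icc (0:ℝ) Tmax, Real.exp (-(M * t.1)) * |u t.1 - w t.1|

open Topology

section Helpers

variable {Td Xs Ta : Set ℝ} {V z w : ℝ → ℝ} {F F₀ : Measure (ℝ × ℝ)} {Vmin Vmax G T : ℝ}

lemma measurableSet_setOf_mem_Sset (hTd : MeasurableSet Td) (hXs : MeasurableSet Xs)
    (hz : Measurable z) : MeasurableSet {q : ℝ × ℝ × ℝ | q.2 ∈ Sset Td Xs z q.1} := by
  have h : {q : ℝ × ℝ × ℝ | q.2 ∈ Sset Td Xs z q.1} =
      ({q | 0 ≤ q.2.1} ∩ {q | q.2.1 ≤ q.1} ∩ (fun q => q.2.1) ⁻¹' Td) ∩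
        ({q | z q.1 - z q.2.1 < q.2.2} ∩ (fun q => q.2.2) ⁻¹' Xs) := by
    ext q
    simp [Sset, and_assoc]
  rw [h]
  refine MeasurableSet.inter (.inter (.inter ?_ ?_) ?_) (.inter ?_ ?_)
  · exact measurableSet_le measurable_const (by fun_prop)
  · exact measurableSet_le (by fun_prop) (by fun_prop)
  · exact measurable_snd.fst hTd
  · exact measurableSet_lt (by fun_prop) (by fun_prop)
  · exact measurable_snd.snd hXs

lemma measurableSet_Sset (hTd : MeasurableSet Td) (hXs : MeasurableSet Xs)
    (hz : Measurable z) (t : ℝ) : MeasurableSet (Sset Td Xs z t) :=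
  measurable_prodMk_left (x := t) (measurableSet_setOf_mem_Sset hTd hXs hz)

lemma measurable_toReal_Sset [SFinite F] (hTd : MeasurableSet Td) (hXs : MeasurableSet Xs)
    (hz : Measurable z) : Measurable fun s => (F (Sset Td Xs z s)).toReal :=
  (measurable_measure_prodMk_left (measurableSet_setOf_mem_Sset hTd hXs hz)).ennreal_toReal

lemma intervalIntegrable_speed [SFinite F] (hTd : MeasurableSet Td) (hXs : MeasurableSet Xs)
    (hz : Measurable z) (hV : ContinuousOn V (Ici 0)) (hVmin : 0 ≤ Vmin)
    (hVbd : ∀ c, 0 ≤ c → Vmin ≤ V c ∧ V c ≤ Vmax) (a b : ℝ) :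
    IntervalIntegrable (fun s => V (F (Sset Td Xs z s)).toReal) volume a b := by
  have hmeas : Measurable fun s => V (F (Sset Td Xs z s)).toReal := by
    have hc : Continuous fun c => V (max c 0) :=
      hV.comp_continuous (by fun_prop) fun c => le_max_right c 0
    convert hc.measurable.comp (measurable_toReal_Sset (F := F) hTd hXs hz) using 2 with s
    simp
  refine (intervalIntegrable_const (c := Vmax)).mono_fun hmeas.aestronglyMeasurable ?_
  refine .of_forall fun s => ?_
  have h := hVbd _ (ENNReal.toReal_nonneg (a := F (Sset Td Xs z s)))
  beta_reduce
  rw [Real.norm_of_nonneg (hVmin.trans h.1), Real.norm_of_nonneg (hVmin.trans (h.1.trans h.2))]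
  exact h.2

lemma sub_mem_Icc_of_eq_Umap [SFinite F] (hTd : MeasurableSet Td) (hXs : MeasurableSet Xs)
    (hz : Measurable z) (hV : ContinuousOn V (Ici 0)) (hVmin : 0 ≤ Vmin)
    (hVbd : ∀ c, 0 ≤ c → Vmin ≤ V c ∧ V c ≤ Vmax)
    (hfix : ∀ t ∈ Icc 0 T, z t = Umap Td Xs V F z t) {s t : ℝ} (hs : s ∈ Icc 0 T)
    (ht : t ∈ Icc 0 T) (hst : s ≤ t) :
    z t - z s ∈ Icc (Vmin * (t - s)) (Vmax * (t - s)) := by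
  have hi := intervalIntegrable_speed (F := F) hTd hXs hz hV hVmin hVbd
  have hbd := fun r => hVbd _ (ENNReal.toReal_nonneg (a := F (Sset Td Xs z r)))
  rw [hfix t ht, hfix s hs, Umap, Umap,
    intervalIntegral.integral_interval_sub_left (hi 0 t) (hi 0 s)]
  have hconst : ∀ c : ℝ, c * (t - s) = ∫ _ in s..t, c := fun c => by
    rw [intervalIntegral.integral_const, smul_eq_mul, mul_comm]
  constructor
  · rw [hconst]
    exact intervalIntegral.integral_mono_on hst intervalIntegrable_const (hi s t)
      fun r _ => (hbd r).1
  · rw [hconst]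
    exact intervalIntegral.integral_mono_on hst (hi s t) intervalIntegrable_const
      fun r _ => (hbd r).2

lemma abs_toReal_Sset_sub_le [IsFiniteMeasure F] (hTd : MeasurableSet Td)
    (hXs : MeasurableSet Xs) (hG : 0 ≤ G)
    (hFG : ∀ B, MeasurableSet B → F B ≤ ENNReal.ofReal G * volume B)
    (hz : Continuous z) (hw : Continuous w) {s : ℝ} (hs : 0 ≤ s) :
    |(F (Sset Td Xs z s)).toReal - (F (Sset Td Xs w s)).toReal| ≤
      G * (s * |z s - w s| + ∫ τ in 0..s, |z τ - w τ|) := by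
  set R : Set (ℝ × ℝ) := {p | p.1 ∈ Icc 0 s ∧ p.2 ∈ uIcc (z s - z p.1) (w s - w p.1)} with hR
  have hRm : MeasurableSet R := by
    refine (IsClosed.inter (isClosed_Icc.preimage continuous_fst) ?_).measurableSet
    exact (isClosed_le (f := fun p : ℝ × ℝ => (z s - z p.1) ⊓ (w s - w p.1))
        (g := Prod.snd) (by fun_prop) (by fun_prop)).inter
      (isClosed_le (f := Prod.snd) (g := fun p : ℝ × ℝ => (z s - z p.1) ⊔ (w s - w p.1))
        (by fun_prop) (by fun_prop))
  have hsub : symmDiff (Sset Td Xs z s) (Sset Td Xs w s) ⊆ R := by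
    rintro ⟨τ, ξ⟩ (⟨h1, h2⟩ | ⟨h1, h2⟩) <;>
    · simp only [Sset, mem_ofPred_eq, mem_inter_iff, mem_Ioi, not_and] at h1 h2
      refine ⟨h1.1.1, ?_⟩
      have h3 := not_lt.1 fun h => h2 h1.1 h h1.2.2
      have h4 := h1.2.1.le
      simp only [mem_uIcc]
      tauto
  have hii : ∀ f : ℝ → ℝ, Continuous f → IntervalIntegrable f volume 0 s :=
    fun f hf => hf.intervalIntegrable 0 s
  have hvol : volume R ≤ ENNReal.ofReal (s * |z s - w s| + ∫ τ in 0..s, |z τ - w τ|) := by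
    have hle : ∀ τ, volume (Prod.mk τ ⁻¹' R) ≤
        (Icc 0 s).indicator (fun τ => ENNReal.ofReal (|z s - w s| + |z τ - w τ|)) τ := by
      intro τ
      by_cases hτ : τ ∈ Icc 0 s
      · have : Prod.mk τ ⁻¹' R = uIcc (z s - z τ) (w s - w τ) := by
          ext ξ
          simp only [hR, mem_preimage, mem_ofPred_eq]
          exact and_iff_right hτ
        rw [this, Real.volume_interval, indicator_of_mem hτ]
        refine ENNReal.ofReal_le_ofReal ?_
        calc |w s - w τ - (z s - z τ)| = |(z τ - w τ) - (z s - w s)| := by congr 1; ring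
          _ ≤ |z τ - w τ| + |z s - w s| := abs_sub _ _
          _ = _ := add_comm _ _
      · have : Prod.mk τ ⁻¹' R = ∅ := by
          ext ξ
          simp only [hR, mem_preimage, mem_ofPred_eq, mem_empty_iff_false, iff_false]
          exact fun h => hτ h.1
        simp [this]
    rw [Measure.volume_eq_prod, Measure.prod_apply hRm]
    refine (lintegral_mono hle).trans_eq ?_
    rw [lintegral_indicator measurableSet_Icc,
      ← ofReal_integral_eq_lintegral_ofReal
        ((Continuous.integrableOn_Icc (by fun_prop)))
        (.of_forall fun τ => by positivity),
      integral_Icc_eq_integral_Ioc, ← intervalIntegral.integral_of_le hs,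
      intervalIntegral.integral_add (hii _ (by fun_prop)) (hii _ (by fun_prop))]
    simp
  have hnn : 0 ≤ s * |z s - w s| + ∫ τ in 0..s, |z τ - w τ| :=
    add_nonneg (by positivity)
      (intervalIntegral.integral_nonneg hs fun _ _ => abs_nonneg _)
  calc _ ≤ F.real (symmDiff (Sset Td Xs z s) (Sset Td Xs w s)) :=
        abs_measureReal_sub_le_measureReal_symmDiff
          (measurableSet_Sset hTd hXs hz.measurable s).nullMeasurableSet
          (measurableSet_Sset hTd hXs hw.measurable s).nullMeasurableSet
    _ ≤ F.real R := measureReal_mono hsub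
    _ ≤ _ := by
      refine ENNReal.toReal_le_of_le_ofReal (by positivity) ?_
      rw [ENNReal.ofReal_mul hG]
      exact (hFG R hRm).trans (by gcongr)

lemma volume_frontier_travelling_eq_zero (hw : Continuous w) (s : ℝ) :
    volume (frontier {p : ℝ × ℝ | p.1 ≤ s ∧ w s - w p.1 < p.2}) = 0 := by
  have h1 : volume {p : ℝ × ℝ | p.1 = s} = 0 := by
    rw [Measure.volume_eq_prod,
      Measure.measure_prod_null (measurableSet_eq_fun measurable_fst measurable_const)]
    have : ∀ᵐ x : ℝ, x ≠ s := Measure.ae_ne volume s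
    filter_upwards [this] with x hx
    simp [hx]
  have h2 : volume {p : ℝ × ℝ | w s - w p.1 = p.2} = 0 := by
    rw [Measure.volume_eq_prod, Measure.measure_prod_null
      (measurableSet_eq_fun (by fun_prop) measurable_snd)]
    refine .of_forall fun x => ?_
    have : Prod.mk x ⁻¹' {p : ℝ × ℝ | w s - w p.1 = p.2} = {w s - w x} := by
      ext y
      simp [eq_comm]
    simp [this]
  refine measure_mono_null (fun p hp => ?_) (measure_union_null h1 h2)
  rcases frontier_inter_subset {p : ℝ × ℝ | p.1 ≤ s} {p | w s - w p.1 < p.2} hp with h | h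
  · exact .inl (frontier_le_subset_eq continuous_fst continuous_const h.1)
  · exact .inr (frontier_lt_subset_eq (by fun_prop) continuous_snd h.2)

lemma measure_Sset_eq_of_support (hTd0 : Td ⊆ Ici 0) (hF : F (Td ×ˢ Xs)ᶜ = 0) (s : ℝ) :
    F (Sset Td Xs w s) = F {p : ℝ × ℝ | p.1 ≤ s ∧ w s - w p.1 < p.2} := by
  refine measure_congr ?_
  filter_upwards [measure_eq_zero_iff_ae_notMem.1 hF] with p hp
  have hp' : p ∈ Td ×ˢ Xs := not_not.1 hp
  have h0 : 0 ≤ p.1 := hTd0 hp'.1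
  refine propext ⟨fun h => ⟨h.1.1.2, h.2.1⟩, fun h => ⟨⟨⟨h0, h.1⟩, hp'.1⟩, h.2, hp'.2⟩⟩

lemma tendsto_toReal_Sset {m : Measure (ℝ × ℝ)} (hTd0 : Td ⊆ Ici 0) (hw : Continuous w)
    {P₀ : ProbabilityMeasure (ℝ × ℝ)} (hP₀ : memP Td Xs Ta m G P₀) (s : ℝ) :
    Tendsto (fun P : ProbabilityMeasure (ℝ × ℝ) =>
        ((P : Measure (ℝ × ℝ)) (Sset Td Xs w s)).toReal)
      (𝓝[{P | memP Td Xs Ta m G (P : Measure (ℝ × ℝ))}] P₀)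
      (𝓝 ((P₀ : Measure (ℝ × ℝ)) (Sset Td Xs w s)).toReal) := by
  rw [measure_Sset_eq_of_support hTd0 hP₀.2.1]
  have hnull : (P₀ : Measure (ℝ × ℝ))
      (frontier {p : ℝ × ℝ | p.1 ≤ s ∧ w s - w p.1 < p.2}) = 0 := by
    have h := hP₀.2.2.1 _ (isClosed_frontier.measurableSet
      (s := frontier {p : ℝ × ℝ | p.1 ≤ s ∧ w s - w p.1 < p.2}))
    rw [volume_frontier_travelling_eq_zero hw, mul_zero] at h
    exact le_antisymm h zero_le
  have hid : Tendsto (fun P => P) (𝓝[{P | memP Td Xs Ta m G (P : Measure (ℝ × ℝ))}] P₀)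
      (𝓝 P₀) := tendsto_id.mono_left nhdsWithin_le_nhds
  have ht := (ENNReal.tendsto_toReal (measure_ne_top _ _)).comp
    (ProbabilityMeasure.tendsto_measure_of_null_frontier_of_tendsto' hid hnull)
  refine ht.congr' ?_
  filter_upwards [self_mem_nhdsWithin] with P hP
  simp only [Function.comp_apply]
  rw [measure_Sset_eq_of_support hTd0 hP.2.1]

lemma le_mul_exp_of_le_add_mul_integral {h : ℝ → ℝ} (hc : Continuous h) {C ε : ℝ}
    (hC : 0 ≤ C) (hh : ∀ t ∈ Icc 0 T, h t ≤ ε + C * ∫ s in 0..t, h s) :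
    ∀ t ∈ Icc 0 T, h t ≤ ε * Real.exp (C * t) := by
  intro t ht
  have hd : ∀ x, HasDerivAt (fun t => ε + C * ∫ s in 0..t, h s) (C * h x) x := fun x =>
    ((intervalIntegral.integral_hasDerivAt_right (hc.intervalIntegrable 0 x)
      (hc.stronglyMeasurableAtFilter _ _) hc.continuousAt).const_mul C).const_add ε
  have key := le_gronwallBound_of_liminf_deriv_right_le (f' := fun x => C * h x)
    (δ := ε) (K := C) (ε := 0) (a := 0) (b := T)
    (fun x _ => (hd x).continuousAt.continuousWithinAt)
    (fun x _ r hr => by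
      simpa [slope_def_field, div_eq_inv_mul] using
        (hd x).hasDerivWithinAt.liminf_right_slope_le hr)
    (by simp)
    (fun x hx => by
      rw [add_zero]
      exact mul_le_mul_of_nonneg_left (hh x ⟨hx.1, hx.2.le⟩) hC) t ht
  rw [gronwallBound_ε0, sub_zero] at key
  exact (hh t ht).trans key

lemma abs_sub_le_of_eq_Umap [IsFiniteMeasure F] [IsFiniteMeasure F₀] (hTd : MeasurableSet Td)
    (hXs : MeasurableSet Xs) (hG : 0 ≤ G)
    (hFG : ∀ B, MeasurableSet B → F B ≤ ENNReal.ofReal G * volume B)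
    {L : NNReal} (hV : LipschitzOnWith L V (Ici 0)) (hVmin : 0 ≤ Vmin)
    (hVbd : ∀ c, 0 ≤ c → Vmin ≤ V c ∧ V c ≤ Vmax)
    (hz : Continuous z) (hw : Continuous w)
    (hzfix : ∀ t ∈ Icc 0 T, z t = Umap Td Xs V F z t)
    (hwfix : ∀ t ∈ Icc 0 T, w t = Umap Td Xs V F₀ w t) (hT : 0 ≤ T) {t : ℝ}
    (ht : t ∈ Icc 0 T) :
    |z t - w t| ≤ (L * ∫ s in 0..T,
      |(F (Sset Td Xs w s)).toReal - (F₀ (Sset Td Xs w s)).toReal|) *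
        Real.exp (2 * L * G * T * T) := by
  set δ : ℝ → ℝ := fun s => |(F (Sset Td Xs w s)).toReal - (F₀ (Sset Td Xs w s)).toReal|
  have hδm : Measurable δ := ((measurable_toReal_Sset hTd hXs hw.measurable).sub
    (measurable_toReal_Sset hTd hXs hw.measurable)).abs
  have hδ : ∀ a b, IntervalIntegrable δ volume a b := fun a b => by
    refine (intervalIntegrable_const (c := F.real univ + F₀.real univ)).mono_fun
      hδm.aestronglyMeasurable (.of_forall fun s => ?_)
    beta_reduce
    rw [Real.norm_of_nonneg (abs_nonneg _), Real.norm_of_nonneg (by positivity)]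
    refine (abs_sub _ _).trans ?_
    rw [abs_of_nonneg ENNReal.toReal_nonneg, abs_of_nonneg ENNReal.toReal_nonneg]
    exact add_le_add (measureReal_mono (subset_univ _)) (measureReal_mono (subset_univ _))
  have hhc : Continuous fun s => |z s - w s| := by fun_prop
  have hhnn : ∀ a b, a ≤ b → 0 ≤ ∫ s in a..b, |z s - w s| := fun a b hab =>
    intervalIntegral.integral_nonneg hab fun _ _ => abs_nonneg _
  have hδnn : ∀ a b, a ≤ b → 0 ≤ ∫ s in a..b, δ s := fun a b hab =>
    intervalIntegral.integral_nonneg hab fun _ _ => abs_nonneg _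
  have hLip : ∀ a b, 0 ≤ a → 0 ≤ b → |V a - V b| ≤ L * |a - b| := fun a b ha hb => by
    simpa [Real.dist_eq] using hV.dist_le_mul a ha b hb
  have hmain : ∀ t ∈ Icc 0 T, |z t - w t| ≤
      L * (∫ s in 0..T, δ s) + 2 * L * G * T * ∫ s in 0..t, |z s - w s| := by
    intro t ht
    have hi := intervalIntegrable_speed (F := F) hTd hXs hz.measurable hV.continuousOn
      hVmin hVbd 0 t
    have hi₀ := intervalIntegrable_speed (F := F₀) hTd hXs hw.measurable hV.continuousOn
      hVmin hVbd 0 t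
    set I := ∫ s in 0..t, |z s - w s|
    have hpt : ∀ s ∈ Icc 0 t,
        |V (F (Sset Td Xs z s)).toReal - V (F₀ (Sset Td Xs w s)).toReal| ≤
          L * G * T * |z s - w s| + L * G * I + L * δ s := by
      intro s hs
      have hI : ∫ τ in 0..s, |z τ - w τ| ≤ I := by
        have := intervalIntegral.integral_add_adjacent_intervals
          (hhc.intervalIntegrable (μ := volume) 0 s) (hhc.intervalIntegrable s t)
        linarith [hhnn s t hs.2]
      calc _ ≤ L * |(F (Sset Td Xs z s)).toReal - (F₀ (Sset Td Xs w s)).toReal| :=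
            hLip _ _ ENNReal.toReal_nonneg ENNReal.toReal_nonneg
        _ ≤ L * (|(F (Sset Td Xs z s)).toReal - (F (Sset Td Xs w s)).toReal| + δ s) := by
            gcongr
            exact abs_sub_le _ _ _
        _ ≤ L * (G * (T * |z s - w s| + I) + δ s) := by
            gcongr
            refine (abs_toReal_Sset_sub_le hTd hXs hG hFG hz hw hs.1).trans ?_
            have := hs.2.trans ht.2
            gcongr
        _ = _ := by ring
    have hii : ∀ f : ℝ → ℝ, Continuous f → IntervalIntegrable f volume 0 t :=
      fun f hf => hf.intervalIntegrable 0 t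
    have h1 : IntervalIntegrable (fun s => L * G * T * |z s - w s| + L * G * I) volume 0 t :=
      hii _ (by fun_prop)
    calc |z t - w t| = |∫ s in 0..t, (V (F (Sset Td Xs z s)).toReal -
          V (F₀ (Sset Td Xs w s)).toReal)| := by
          rw [hzfix t ht, hwfix t ht, Umap, Umap, intervalIntegral.integral_sub hi hi₀]
      _ ≤ ∫ s in 0..t, |V (F (Sset Td Xs z s)).toReal - V (F₀ (Sset Td Xs w s)).toReal| :=
          intervalIntegral.abs_integral_le_integral_abs ht.1
      _ ≤ ∫ s in 0..t, (L * G * T * |z s - w s| + L * G * I + L * δ s) :=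
          intervalIntegral.integral_mono_on ht.1 (hi.sub hi₀).abs
            (h1.add ((hδ 0 t).const_mul _)) hpt
      _ = L * G * T * I + t * (L * G * I) + L * ∫ s in 0..t, δ s := by
          rw [intervalIntegral.integral_add h1 ((hδ 0 t).const_mul _),
            intervalIntegral.integral_add (hii _ (by fun_prop)) (hii _ (by fun_prop)),
            intervalIntegral.integral_const_mul, intervalIntegral.integral_const_mul,
            intervalIntegral.integral_const_mul, intervalIntegral.integral_const,
            smul_eq_mul, sub_zero]
          ring
      _ ≤ L * G * T * I + T * (L * G * I) + L * ∫ s in 0..T, δ s := by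
          have hI0 : 0 ≤ I := hhnn 0 t ht.1
          have hδT := intervalIntegral.integral_add_adjacent_intervals (hδ 0 t) (hδ t T)
          have := hδnn t T ht.2
          have := ht.2
          gcongr
          linarith
      _ = _ := by ring
  refine (le_mul_exp_of_le_add_mul_integral hhc (by positivity) hmain t ht).trans ?_
  have := ht.2
  have := hδnn 0 T hT
  gcongr

lemma tendsto_integral_abs_toReal_Sset_sub {m : Measure (ℝ × ℝ)} (hTdm : MeasurableSet Td)
    (hXs : MeasurableSet Xs) (hTd0 : Td ⊆ Ici 0) (hw : Continuous w)
    {P₀ : ProbabilityMeasure (ℝ × ℝ)} (hP₀ : memP Td Xs Ta m G P₀) :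
    Tendsto (fun P : ProbabilityMeasure (ℝ × ℝ) => ∫ s in 0..T,
        |((P : Measure (ℝ × ℝ)) (Sset Td Xs w s)).toReal -
          ((P₀ : Measure (ℝ × ℝ)) (Sset Td Xs w s)).toReal|)
      (𝓝[{P | memP Td Xs Ta m G (P : Measure (ℝ × ℝ))}] P₀) (𝓝 0) := by
  have h := intervalIntegral.tendsto_integral_filter_of_dominated_convergence
    (μ := volume) (a := 0) (b := T) (f := fun _ => (0 : ℝ))
    (l := 𝓝[{P : ProbabilityMeasure (ℝ × ℝ) | memP Td Xs Ta m G (P : Measure (ℝ × ℝ))}] P₀)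
    (F := fun P s => |((P : Measure (ℝ × ℝ)) (Sset Td Xs w s)).toReal -
          ((P₀ : Measure (ℝ × ℝ)) (Sset Td Xs w s)).toReal|) (fun _ => 1)
    (.of_forall fun P => ((measurable_toReal_Sset hTdm hXs hw.measurable).sub
      (measurable_toReal_Sset hTdm hXs hw.measurable)).abs.aestronglyMeasurable)
    (.of_forall fun P => .of_forall fun s _ => by
      rw [Real.norm_of_nonneg (abs_nonneg _)]
      exact abs_sub_le_of_nonneg_of_le ENNReal.toReal_nonneg measureReal_le_one
        ENNReal.toReal_nonneg measureReal_le_one)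
    intervalIntegrable_const
    (.of_forall fun s _ => by
      simpa using ((tendsto_toReal_Sset hTd0 hw hP₀ s).sub_const
        ((P₀ : Measure (ℝ × ℝ)) (Sset Td Xs w s)).toReal).abs)
  simpa using h

/-- The cost `α (e - a) + β (c - e)₊ + γ (e - c)₊` in terms of the departure time `a`, the
arrival time `e` and the desired arrival time `c` is Lipschitz. -/
lemma abs_cost_sub_le {α β γ : ℝ} (hα : 0 ≤ α) (hβ : 0 ≤ β) (hγ : 0 ≤ γ)
    (a T c a' T' c' : ℝ) :
    |(α * T + β * max (c - a - T) 0 + γ * max (a + T - c) 0) -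
      (α * T' + β * max (c' - a' - T') 0 + γ * max (a' + T' - c') 0)| ≤
      (α + β + γ) * (|(a + T) - (a' + T')| + |a - a'| + |c - c'|) := by
  have hmax : ∀ u v : ℝ, |max u 0 - max v 0| ≤ |u - v| := fun u v => by
    simpa using abs_max_sub_max_le_max u 0 v 0
  have h1 := hmax (c - a - T) (c' - a' - T')
  have h2 := hmax (a + T - c) (a' + T' - c')
  set E := a + T
  set E' := a' + T'
  have e1 : |c - a - T - (c' - a' - T')| ≤ |E - E'| + |c - c'| := by
    rw [show c - a - T - (c' - a' - T') = (c - c') - (E - E') by ring, add_comm]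
    exact abs_sub _ _
  have e2 : |E - c - (E' - c')| ≤ |E - E'| + |c - c'| := by
    rw [show E - c - (E' - c') = (E - E') - (c - c') by ring]
    exact abs_sub _ _
  have e3 : |T - T'| ≤ |E - E'| + |a - a'| := by
    rw [show T - T' = (E - E') - (a - a') by ring]
    exact abs_sub _ _
  have ha := abs_nonneg (a - a')
  have hc := abs_nonneg (c - c')
  rw [show ∀ p q r p' q' r' : ℝ, α * p + β * q + γ * r - (α * p' + β * q' + γ * r') =
    α * (p - p') + β * (q - q') + γ * (r - r') by intros; ring]
  refine (abs_add_three _ _ _).trans ?_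
  rw [abs_mul, abs_mul, abs_mul, abs_of_nonneg hα, abs_of_nonneg hβ, abs_of_nonneg hγ,
    add_mul, add_mul]
  gcongr <;> linarith

/-- If two functions growing at rates in `[Vmin, Vmax]` are `D`-close on `[0, T]`, then the
corresponding arrival times of trips depend in a Lipschitz way on departure time and length,
up to an error `2 D`. -/
lemma abs_arrival_sub_le (hVmin : 0 ≤ Vmin)
    (hz : ∀ s ∈ Icc 0 T, ∀ t ∈ Icc 0 T, s ≤ t →
      z t - z s ∈ Icc (Vmin * (t - s)) (Vmax * (t - s)))
    {D : ℝ} (hD : ∀ t ∈ Icc 0 T, |z t - w t| ≤ D) {a a' e e' x x' : ℝ}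
    (ha : a ∈ Icc 0 T) (ha' : a' ∈ Icc 0 T) (he : e ∈ Icc 0 T) (he' : e' ∈ Icc 0 T)
    (hze : z e = x + z a) (hwe : w e' = x' + w a') :
    Vmin * |e - e'| ≤ |x - x'| + Vmax * |a - a'| + 2 * D := by
  have hlow : Vmin * |e - e'| ≤ |z e - z e'| := by
    rcases le_total e e' with h | h
    · rw [abs_sub_comm e, abs_sub_comm (z e), abs_of_nonneg (sub_nonneg.2 h)]
      exact (hz e he e' he' h).1.trans (le_abs_self _)
    · rw [abs_of_nonneg (sub_nonneg.2 h)]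
      exact (hz e' he' e he h).1.trans (le_abs_self _)
  have hupp : z a - z a' ≤ Vmax * |a - a'| ∧ z a' - z a ≤ Vmax * |a - a'| := by
    rcases le_total a a' with h | h
    · have h1 := hz a ha a' ha' h
      have h2 : z a ≤ z a' := sub_nonneg.1 ((mul_nonneg hVmin (sub_nonneg.2 h)).trans h1.1)
      rw [abs_sub_comm, abs_of_nonneg (sub_nonneg.2 h)]
      exact ⟨by linarith [h1.2], h1.2⟩
    · have h1 := hz a' ha' a ha h
      have h2 : z a' ≤ z a := sub_nonneg.1 ((mul_nonneg hVmin (sub_nonneg.2 h)).trans h1.1)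
      rw [abs_of_nonneg (sub_nonneg.2 h)]
      exact ⟨h1.2, by linarith [h1.2]⟩
  have h1 := abs_le.1 (hD a' ha')
  have h2 := abs_le.1 (hD e' he')
  have h3 := abs_le.1 (le_refl |x - x'|)
  refine hlow.trans (abs_le.2 ⟨?_, ?_⟩) <;> linarith

end Helpers

/-- Proposition 5: joint continuity and Lipschitz continuity of the
cost function. Suppose `V` is Lipschitz with `0 < Vmin ≤ V ≤ Vmax`, for each
`F ∈ 𝒫_{m,G}` the characteristic travel distance `zsol F` solves the fixed-point
equation, and the travel time `Tt F t_d x` is characterized by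
`t_d + Tt F t_d x ∈ 𝒯` and `zsol F (t_d + Tt F t_d x) = x + zsol F t_d`
(all trips complete within the horizon). Then the cost
`J(t_d; x, t_a; F) = α·T_F(t_d,x) + β·(t_a − t_d − T_F(t_d,x))₊ + γ·(t_d + T_F(t_d,x) − t_a)₊`
is jointly continuous on `𝒯_d × 𝒳 × 𝒯_a × 𝒫_{m,G}` (with the weak topology on
`𝒫_{m,G}`), and for each fixed `F ∈ 𝒫_{m,G}` it is Lipschitz in `(t_d, x, t_a)`
with a Lipschitz constant independent of `F`. -/
theorem cost_jointly_continuous_and_Lipschitz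
    (Tmax Xmin Xmax G : ℝ) (hT : 0 < Tmax) (hXmin : 0 < Xmin) (hXX : Xmin < Xmax)
    (hG : 0 < G)
    (Td Ta : Set ℝ) (hTdc : IsCompact Td) (hTd : Td ⊆ Set.Icc 0 Tmax)
    (hTac : IsCompact Ta) (hTa : Ta ⊆ Set.Icc 0 Tmax)
    (m : Measure (ℝ × ℝ)) (hm : IsProbabilityMeasure m)
    (V : ℝ → ℝ) (LV : NNReal) (hV : LipschitzOnWith LV V (Set.Ici 0))
    (Vmin Vmax : ℝ) (hVmin : 0 < Vmin)
    (hVbd : ∀ c : ℝ, 0 ≤ c → Vmin ≤ V c ∧ V c ≤ Vmax)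
    (α β γ : ℝ) (hα : 0 < α) (hβ : 0 < β) (hγ : 0 < γ)
    (zsol : ProbabilityMeasure (ℝ × ℝ) → ℝ → ℝ)
    (Tt : ProbabilityMeasure (ℝ × ℝ) → ℝ → ℝ → ℝ)
    (hzsol : ∀ F : ProbabilityMeasure (ℝ × ℝ),
      memP Td (Set.Icc Xmin Xmax) Ta m G (F : Measure (ℝ × ℝ)) →
      Continuous (zsol F) ∧
        ∀ t ∈ Set.Icc (0:ℝ) Tmax,
          zsol F t = Umap Td (Set.Icc Xmin Xmax) V (F : Measure (ℝ × ℝ)) (zsol F) t)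
    (hTt : ∀ F : ProbabilityMeasure (ℝ × ℝ),
      memP Td (Set.Icc Xmin Xmax) Ta m G (F : Measure (ℝ × ℝ)) →
      ∀ td ∈ Td, ∀ x ∈ Set.Icc Xmin Xmax,
        td + Tt F td x ∈ Set.Icc (0:ℝ) Tmax ∧
          zsol F (td + Tt F td x) = x + zsol F td) :
    ContinuousOn
      (fun p : (ℝ × ℝ × ℝ) × ProbabilityMeasure (ℝ × ℝ) =>
        α * Tt p.2 p.1.1 p.1.2.1
          + β * max (p.1.2.2 - p.1.1 - Tt p.2 p.1.1 p.1.2.1) 0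
          + γ * max (p.1.1 + Tt p.2 p.1.1 p.1.2.1 - p.1.2.2) 0)
      ((Td ×ˢ Set.Icc Xmin Xmax ×ˢ Ta) ×ˢ
        {F : ProbabilityMeasure (ℝ × ℝ) |
          memP Td (Set.Icc Xmin Xmax) Ta m G (F : Measure (ℝ × ℝ))}) ∧
    ∃ K : NNReal, ∀ F : ProbabilityMeasure (ℝ × ℝ),
      memP Td (Set.Icc Xmin Xmax) Ta m G (F : Measure (ℝ × ℝ)) →
      LipschitzOnWith K
        (fun q : ℝ × ℝ × ℝ =>
          α * Tt F q.1 q.2.1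
            + β * max (q.2.2 - q.1 - Tt F q.1 q.2.1) 0
            + γ * max (q.1 + Tt F q.1 q.2.1 - q.2.2) 0)
        (Td ×ˢ Set.Icc Xmin Xmax ×ˢ Ta) := by
  have hTdm := hTdc.measurableSet
  have hXm : MeasurableSet (Icc Xmin Xmax) := measurableSet_Icc
  have hVmax : 0 < Vmax := hVmin.trans_le ((hVbd 0 le_rfl).1.trans (hVbd 0 le_rfl).2)
  have hgrow : ∀ F : ProbabilityMeasure (ℝ × ℝ),
      memP Td (Icc Xmin Xmax) Ta m G (F : Measure (ℝ × ℝ)) →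
      ∀ s ∈ Icc 0 Tmax, ∀ t ∈ Icc 0 Tmax, s ≤ t →
        zsol F t - zsol F s ∈ Icc (Vmin * (t - s)) (Vmax * (t - s)) :=
    fun F hF s hs t ht hst => sub_mem_Icc_of_eq_Umap hTdm hXm (hzsol F hF).1.measurable
      hV.continuousOn hVmin.le hVbd (hzsol F hF).2 hs ht hst
  have hcost : ∀ F F' : ProbabilityMeasure (ℝ × ℝ),
      memP Td (Icc Xmin Xmax) Ta m G (F : Measure (ℝ × ℝ)) →
      memP Td (Icc Xmin Xmax) Ta m G (F' : Measure (ℝ × ℝ)) →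
      ∀ D : ℝ, (∀ t ∈ Icc 0 Tmax, |zsol F t - zsol F' t| ≤ D) →
      ∀ q ∈ Td ×ˢ Icc Xmin Xmax ×ˢ Ta, ∀ q' ∈ Td ×ˢ Icc Xmin Xmax ×ˢ Ta,
      |(α * Tt F q.1 q.2.1 + β * max (q.2.2 - q.1 - Tt F q.1 q.2.1) 0
          + γ * max (q.1 + Tt F q.1 q.2.1 - q.2.2) 0) -
        (α * Tt F' q'.1 q'.2.1 + β * max (q'.2.2 - q'.1 - Tt F' q'.1 q'.2.1) 0
          + γ * max (q'.1 + Tt F' q'.1 q'.2.1 - q'.2.2) 0)| ≤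
        (α + β + γ) * ((dist q q' + Vmax * dist q q' + 2 * D) / Vmin
          + dist q q' + dist q q') := by
    intro F F' hF hF' D hD q hq q' hq'
    have hE := hTt F hF q.1 hq.1 q.2.1 hq.2.1
    have hE' := hTt F' hF' q'.1 hq'.1 q'.2.1 hq'.2.1
    have harr := abs_arrival_sub_le hVmin.le (hgrow F hF) hD (hTd hq.1) (hTd hq'.1)
      hE.1 hE'.1 hE.2 hE'.2
    have h1 : |q.1 - q'.1| ≤ dist q q' := le_max_left _ _
    have h2 : |q.2.1 - q'.2.1| ≤ dist q q' := (le_max_left _ _).trans (le_max_right _ _)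
    have h3 : |q.2.2 - q'.2.2| ≤ dist q q' := (le_max_right _ _).trans (le_max_right _ _)
    refine (abs_cost_sub_le hα.le hβ.le hγ.le _ _ _ _ _ _).trans ?_
    gcongr
    rw [le_div_iff₀' hVmin]
    exact harr.trans (by gcongr)
  constructor
  · rintro ⟨q₀, F₀⟩ ⟨hq₀, hF₀⟩
    set D : ProbabilityMeasure (ℝ × ℝ) → ℝ := fun F => (LV * ∫ s in 0..Tmax,
      |((F : Measure (ℝ × ℝ)) (Sset Td (Icc Xmin Xmax) (zsol F₀) s)).toReal -
        ((F₀ : Measure (ℝ × ℝ)) (Sset Td (Icc Xmin Xmax) (zsol F₀) s)).toReal|) *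
        Real.exp (2 * LV * G * Tmax * Tmax)
    have hD : Tendsto D
        (𝓝[{F | memP Td (Icc Xmin Xmax) Ta m G (F : Measure (ℝ × ℝ))}] F₀) (𝓝 0) := by
      simpa using ((tendsto_integral_abs_toReal_Sset_sub (T := Tmax) hTdm hXm
        (fun t ht => (hTd ht).1) (hzsol F₀ hF₀).1 hF₀).const_mul (LV : ℝ)).mul_const
          (Real.exp (2 * LV * G * Tmax * Tmax))
    rw [ContinuousWithinAt, tendsto_iff_dist_tendsto_zero]
    have hq : Tendsto (fun q => dist q q₀) (𝓝[Td ×ˢ Icc Xmin Xmax ×ˢ Ta] q₀) (𝓝 0) :=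
      (tendsto_iff_dist_tendsto_zero.1 tendsto_id).mono_left nhdsWithin_le_nhds
    have hq1 := hq.comp (tendsto_fst
      (g := 𝓝[{F | memP Td (Icc Xmin Xmax) Ta m G (F : Measure (ℝ × ℝ))}] F₀))
    have hD1 := hD.comp (tendsto_snd (f := 𝓝[Td ×ˢ Icc Xmin Xmax ×ˢ Ta] q₀))
    rw [← nhdsWithin_prod_eq] at hq1 hD1
    have hlim := ((((hq1.add (hq1.const_mul Vmax)).add (hD1.const_mul 2)).div_const
      Vmin).add hq1 |>.add hq1).const_mul (α + β + γ)
    simp only [mul_zero, add_zero, zero_div] at hlim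
    refine squeeze_zero' (.of_forall fun _ => dist_nonneg) ?_ hlim
    filter_upwards [self_mem_nhdsWithin] with p hp
    exact hcost p.2 F₀ hp.2 hF₀ (D p.2)
      (fun t ht => abs_sub_le_of_eq_Umap hTdm hXm hG.le hp.2.2.2.1 hV hVmin.le hVbd
        (hzsol p.2 hp.2).1 (hzsol F₀ hF₀).1 (hzsol p.2 hp.2).2 (hzsol F₀ hF₀).2 hT.le ht)
      p.1 hp.1 q₀ hq₀
  · refine ⟨⟨(α + β + γ) * ((1 + Vmax) / Vmin + 2), by positivity⟩, fun F hF =>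
      LipschitzOnWith.of_dist_le_mul fun q hq q' hq' => ?_⟩
    refine (hcost F F hF hF 0 (by simp) q hq q' hq').trans_eq ?_
    change _ = (α + β + γ) * ((1 + Vmax) / Vmin + 2) * dist q q'
    ring
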